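/- Fix n ≥ 1, an integer k ≥ 1, and b ∈ (-1,1), and let c_k = k(n+k-1). Let f_k : [0,1) → R be the solution of the ordinary differential equation f_k''(r) + (n/r - 2br/(1-r²)) f_k'(r) - (c_k/r²) f_k(r) = 0 on (0,1) which satisfies f_k(r) = O(r^k) as r → 0 and lim_{r→1} f_k(r) = 1. Let α_k and β_k be the two roots of X² - ((n-1)/2 + k + b)X + kb/2 = 0, and define A(b,k) = 2^{-b} (Γ(b+1)/Γ(1-b)) (Γ(β_k+1-b)Γ(α_k+1-b)/(Γ(α_k+1)Γ(β_k+1))) k. Then lim_{r→1⁻} ((1-r²)/2)^b f_k'(r) = A(b,k). -/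

import Mathlib

noncomputable section
open Real Filter Set

lemma aux_decay (x : ℕ → ℝ) (hx : ∀ m, 0 ≤ x m) (ε : ℝ) (hε : 0 < ε) (m0 : ℕ)
    (h : ∀ m, m0 ≤ m → ε * x m ≤ m * x m - (m + 1 : ℝ) * x (m + 1)) :
    Summable x ∧ Tendsto (fun m : ℕ => (m : ℝ) * x m) atTop (nhds 0) := by
  have hs : Summable x := by
    rw [← summable_nat_add_iff m0]
    apply summable_of_sum_range_le (c := (m0 * x m0) / ε) (fun n => hx _)
    intro N
    have : ε * ∑ i ∈ Finset.range N, x (i + m0) ≤ m0 * x m0 - ((N + m0 : ℕ) : ℝ) * x (N + m0) := by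
      induction N with
      | zero => simp
      | succ N ih =>
        rw [Finset.sum_range_succ, mul_add]
        have h2 := h (N + m0) (by omega)
        have e : N + 1 + m0 = N + m0 + 1 := by ring
        rw [e]
        push_cast at *
        linarith
    rw [le_div_iff₀ hε]
    have : 0 ≤ ((N + m0 : ℕ) : ℝ) * x (N + m0) := mul_nonneg (by positivity) (hx _)
    linarith
  refine ⟨hs, ?_⟩
  have hanti : Antitone (fun m : ℕ => ((m + m0 : ℕ) : ℝ) * x (m + m0)) := by
    apply antitone_nat_of_succ_le
    intro m
    have h2 := h (m + m0) (by omega)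
    have e : m + 1 + m0 = m + m0 + 1 := by ring
    rw [e]
    have := mul_nonneg hε.le (hx (m + m0))
    push_cast at *
    linarith
  have hbdd : BddBelow (range (fun m : ℕ => ((m + m0 : ℕ) : ℝ) * x (m + m0))) := by
    refine ⟨0, ?_⟩
    rintro _ ⟨m, rfl⟩
    exact mul_nonneg (by positivity) (hx _)
  have ht := tendsto_atTop_ciInf hanti hbdd
  set L := ⨅ m : ℕ, ((m + m0 : ℕ) : ℝ) * x (m + m0) with hL
  have hle : ∀ m : ℕ, L ≤ ((m + m0 : ℕ) : ℝ) * x (m + m0) := fun m => ciInf_le hbdd m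
  have hL0 : 0 ≤ L := le_ciInf (fun m => mul_nonneg (by positivity) (hx _))
  have hLz : L = 0 := by
    by_contra hne
    have hLpos : 0 < L := lt_of_le_of_ne hL0 (Ne.symm hne)
    apply Real.not_summable_natCast_inv
    rw [← summable_nat_add_iff m0]
    refine Summable.of_nonneg_of_le (fun _ => by positivity) ?_
      (((summable_nat_add_iff m0).2 hs).mul_left L⁻¹)
    intro m
    rcases Nat.eq_zero_or_pos (m + m0) with h0 | h0
    · rw [h0]; simp; exact mul_nonneg (by positivity) (hx _)
    · have : (0 : ℝ) < ((m + m0 : ℕ) : ℝ) := by exact_mod_cast h0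
      have h3 := hle m
      rw [inv_mul_eq_div, inv_eq_one_div, div_le_div_iff₀ this hLpos]
      linarith
  rw [hLz] at ht
  exact (tendsto_add_atTop_iff_nat (f := fun m : ℕ => (m : ℝ) * x m) m0).1 ht

/-- hypergeometric coefficients -/
def hc (α β c : ℝ) (m : ℕ) : ℝ :=
  ∏ j ∈ Finset.range m, ((α + j) * (β + j) / ((c + j) * (1 + j)))

lemma hc_zero (α β c : ℝ) : hc α β c 0 = 1 := by simp [hc]

lemma hc_succ (α β c : ℝ) (m : ℕ) :
    hc α β c (m + 1) = hc α β c m * ((α + m) * (β + m) / ((c + m) * (1 + m))) := by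
  exact Finset.prod_range_succ _ _

lemma hc_rec (α β c : ℝ) (hcpos : 0 < c) (m : ℕ) :
    hc α β c (m + 1) * ((c + m) * (1 + m)) = hc α β c m * ((α + m) * (β + m)) := by
  rw [hc_succ]
  have : c + m ≠ 0 := by positivity
  have : (1 : ℝ) + m ≠ 0 := by positivity
  field_simp

lemma hc_decay (α β c : ℝ) (hcpos : 0 < c) (hδ : 0 < c - α - β) :
    Summable (fun m => |hc α β c m|) ∧
      Tendsto (fun m : ℕ => (m : ℝ) * |hc α β c m|) atTop (nhds 0) := by
  obtain ⟨m0, hm0⟩ := exists_nat_ge (max (c + 2 * |α * β| / (c - α - β)) (max |α| |β|))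
  apply aux_decay _ (fun m => abs_nonneg _) ((c - α - β) / 2) (by linarith) m0
  intro m hm
  have hm' : (m0 : ℝ) ≤ m := by exact_mod_cast hm
  have h1 : c + 2 * |α * β| / (c - α - β) ≤ m := (le_max_left _ _).trans (hm0.trans hm')
  have h2 : |α| ≤ m := ((le_max_left _ _).trans (le_max_right _ _)).trans (hm0.trans hm')
  have h3 : |β| ≤ m := ((le_max_right _ _).trans (le_max_right _ _)).trans (hm0.trans hm')
  have hα : 0 ≤ α + m := by linarith [neg_abs_le α]
  have hβ : 0 ≤ β + m := by linarith [neg_abs_le β]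
  have h4 : 0 < c + m := by positivity
  have h5 : (0 : ℝ) < 1 + m := by positivity
  rw [hc_succ, abs_mul, abs_of_nonneg (a := (α + m) * (β + m) / ((c + m) * (1 + m))) (by positivity)]
  have h6 : 2 * |α * β| ≤ (m - c) * (c - α - β) := by
    rw [← div_le_iff₀ hδ]; linarith
  have h7 := le_abs_self (α * β)
  have e : (m : ℝ) * |hc α β c m| - (m + 1 : ℝ) * (|hc α β c m| * ((α + m) * (β + m) / ((c + m) * (1 + m))))
      = |hc α β c m| * (((c - α - β) * m - α * β) / (c + m)) := by
    field_simp
    ring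
  rw [e, mul_comm]
  apply mul_le_mul_of_nonneg_left _ (abs_nonneg _)
  rw [le_div_iff₀ h4]
  nlinarith

lemma hc_shift (α β c : ℝ) (hcpos : 0 < c) (m : ℕ) :
    hc α β (c + 1) m * (c + m) = hc α β c m * c := by
  induction m with
  | zero => simp [hc_zero]
  | succ m ih =>
    rw [hc_succ, hc_succ]
    push_cast
    have : c + m ≠ 0 := by positivity
    have : c + 1 + m ≠ 0 := by positivity
    have : (1 : ℝ) + m ≠ 0 := by positivity
    have e : hc α β (c + 1) m = hc α β c m * c / (c + m) := by
      rw [eq_div_iff (by assumption)]; exact ih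
    rw [e]
    field_simp
    ring

lemma gauss_step (α β c : ℝ) (hcpos : 0 < c) (hδ : 0 < c - α - β) :
    c * (c - α - β) * ∑' m, hc α β c m = (c - α) * (c - β) * ∑' m, hc α β (c + 1) m := by
  have s1 := (hc_decay α β c hcpos hδ).1.of_abs
  have s2 := (hc_decay α β (c + 1) (by linarith) (by linarith)).1.of_abs
  have t := (hc_decay α β c hcpos hδ).2
  have t' : Tendsto (fun m : ℕ => (m : ℝ) * hc α β c m) atTop (nhds 0) := by
    rw [tendsto_zero_iff_abs_tendsto_zero]
    refine t.congr (fun m => ?_)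
    simp [abs_mul]
  have key : ∀ m : ℕ, c * (c - α - β) * hc α β c m - (c - α) * (c - β) * hc α β (c + 1) m
      = c * (m * hc α β c m) - c * ((m + 1 : ℕ) * hc α β c (m + 1)) := by
    intro m
    have h4 : c + m ≠ 0 := by positivity
    have h5 : (1 : ℝ) + m ≠ 0 := by positivity
    have e : hc α β (c + 1) m = hc α β c m * c / (c + m) := by
      rw [eq_div_iff h4]; exact hc_shift α β c hcpos m
    rw [e, hc_succ]
    push_cast
    field_simp
    ring
  have hsum : HasSum (fun m => c * (c - α - β) * hc α β c m - (c - α) * (c - β) * hc α β (c + 1) m)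
      (c * (c - α - β) * ∑' m, hc α β c m - (c - α) * (c - β) * ∑' m, hc α β (c + 1) m) :=
    (s1.hasSum.mul_left _).sub (s2.hasSum.mul_left _)
  have l1 := hsum.tendsto_sum_nat
  have l2 : Tendsto (fun N => ∑ m ∈ Finset.range N,
      (c * (c - α - β) * hc α β c m - (c - α) * (c - β) * hc α β (c + 1) m)) atTop (nhds 0) := by
    have e : ∀ N, ∑ m ∈ Finset.range N,
      (c * (c - α - β) * hc α β c m - (c - α) * (c - β) * hc α β (c + 1) m) =
        - c * (N * hc α β c N) := by
      intro N
      rw [Finset.sum_congr rfl (fun m _ => key m),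
        Finset.sum_range_sub' (fun m : ℕ => c * (m * hc α β c m))]
      simp
    simp_rw [e]
    simpa using t'.const_mul (-c)
  have := tendsto_nhds_unique l1 l2
  linarith

lemma gauss_iter (α β c : ℝ) (hcpos : 0 < c) (hδ : 0 < c - α - β) (N : ℕ) :
    ((∏ j ∈ Finset.range N, (c + j)) * ∏ j ∈ Finset.range N, (c - α - β + j)) *
        ∑' m, hc α β c m =
      ((∏ j ∈ Finset.range N, (c - α + j)) * ∏ j ∈ Finset.range N, (c - β + j)) *
        ∑' m, hc α β (c + N) m := by
  induction N with
  | zero => simp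
  | succ N ih =>
    simp only [Finset.prod_range_succ]
    have h := gauss_step α β (c + N) (by positivity) (by
      have : (0 : ℝ) ≤ N := by positivity
      linarith)
    have e : c + ((N + 1 : ℕ) : ℝ) = c + N + 1 := by push_cast; ring
    rw [e]
    calc _ = (c + N) * (c - α - β + N) * (((∏ j ∈ Finset.range N, (c + j)) * ∏ j ∈ Finset.range N, (c - α - β + j)) *
        ∑' m, hc α β c m) := by ring
      _ = ((∏ j ∈ Finset.range N, (c - α + j)) * ∏ j ∈ Finset.range N, (c - β + j)) * ((c + N) * (c + N - α - β) * ∑' m, hc α β (c + N) m) := by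
        rw [ih]; ring
      _ = _ := by rw [h]; ring

lemma hc_abs_le (α β c : ℝ) (hcpos : 0 < c) (d : ℝ) (hd : 0 ≤ d) (m : ℕ) :
    |hc α β (c + d) m| ≤ |hc α β c m| := by
  simp only [hc, Finset.abs_prod]
  apply Finset.prod_le_prod (fun _ _ => abs_nonneg _)
  intro j _
  rw [abs_div, abs_div]
  apply div_le_div_of_nonneg_left (abs_nonneg _)
  · have : 0 < (c + j) * (1 + (j : ℝ)) := by positivity
    exact abs_pos.2 this.ne'
  · rw [abs_of_nonneg (by positivity), abs_of_nonneg (by positivity)]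
    gcongr
    linarith

lemma hc_tendsto (α β c : ℝ) (m : ℕ) (hm : 1 ≤ m) :
    Tendsto (fun N : ℕ => hc α β (c + N) m) atTop (nhds 0) := by
  obtain ⟨p, rfl⟩ : ∃ p, m = p + 1 := ⟨m - 1, by omega⟩
  have h1 : ∀ j : ℕ, Tendsto (fun N : ℕ => (α + j) * (β + j) / ((c + N + j) * (1 + (j : ℝ)))) atTop (nhds 0) := by
    intro j
    apply Tendsto.div_atTop tendsto_const_nhds
    apply Tendsto.atTop_mul_const (by positivity)
    apply tendsto_atTop_add_const_right
    exact tendsto_atTop_add_const_left _ _ tendsto_natCast_atTop_atTop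
  have := tendsto_finsetProd (Finset.range (p + 1)) (fun j _ => h1 j)
  simpa [hc] using this

lemma gauss_lim (α β c : ℝ) (hcpos : 0 < c) (hδ : 0 < c - α - β) :
    Tendsto (fun N : ℕ => ∑' m, hc α β (c + N) m) atTop (nhds 1) := by
  have h := tendsto_tsum_of_dominated_convergence (𝓕 := (atTop : Filter ℕ))
    (f := fun N : ℕ => fun m => hc α β (c + N) m) (g := fun m => if m = 0 then (1 : ℝ) else 0)
    (hc_decay α β c hcpos hδ).1 ?_ ?_
  · simpa using h
  · intro m
    by_cases hm : m = 0
    · simp [hm, hc_zero]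
    · simp only [hm, if_false]
      exact hc_tendsto α β c m (by omega)
  · exact Eventually.of_forall fun N m => hc_abs_le α β c hcpos N (by positivity) m

lemma gauss (α β c : ℝ) (hcpos : 0 < c) (hδ : 0 < c - α - β) (h1 : 0 < c - α) (h2 : 0 < c - β) :
    ∑' m, hc α β c m = Gamma c * Gamma (c - α - β) / (Gamma (c - α) * Gamma (c - β)) := by
  have g1 := Gamma_pos_of_pos h1
  have g2 := Gamma_pos_of_pos h2
  have L : Tendsto (fun N : ℕ => GammaSeq c N * GammaSeq (c - α - β) N /
      (GammaSeq (c - α) N * GammaSeq (c - β) N)) atTop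
      (nhds (Gamma c * Gamma (c - α - β) / (Gamma (c - α) * Gamma (c - β)))) :=
    ((GammaSeq_tendsto_Gamma _).mul (GammaSeq_tendsto_Gamma _)).div
      ((GammaSeq_tendsto_Gamma _).mul (GammaSeq_tendsto_Gamma _)) (by positivity)
  have L2 := L.mul ((tendsto_add_atTop_iff_nat 1).2 (gauss_lim α β c hcpos hδ))
  rw [mul_one] at L2
  refine tendsto_nhds_unique (tendsto_const_nhds.congr' ?_) L2
  filter_upwards [eventually_gt_atTop 0] with N hN
  have hi := gauss_iter α β c hcpos hδ (N + 1)
  have hN' : (0 : ℝ) < N := by exact_mod_cast hN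
  have pp : ∀ x : ℝ, 0 < x → 0 < ∏ j ∈ Finset.range (N + 1), (x + j) := fun x hx =>
    Finset.prod_pos (fun j _ => by positivity)
  have p1 := pp _ hcpos
  have p2 := pp _ hδ
  have p3 := pp _ h1
  have p4 := pp _ h2
  have f0 : (0 : ℝ) < N.factorial := by exact_mod_cast N.factorial_pos
  have e : (N : ℝ) ^ c * (N : ℝ) ^ (c - α - β) = (N : ℝ) ^ (c - α) * (N : ℝ) ^ (c - β) := by
    rw [← rpow_add hN', ← rpow_add hN']; congr 1; ring
  have q1 : 0 < (N : ℝ) ^ (c - α) := rpow_pos_of_pos hN' _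
  have q2 : 0 < (N : ℝ) ^ (c - β) := rpow_pos_of_pos hN' _
  have key : GammaSeq c N * GammaSeq (c - α - β) N / (GammaSeq (c - α) N * GammaSeq (c - β) N) =
      ((∏ j ∈ Finset.range (N + 1), (c - α + j)) * ∏ j ∈ Finset.range (N + 1), (c - β + j)) /
      ((∏ j ∈ Finset.range (N + 1), (c + j)) * ∏ j ∈ Finset.range (N + 1), (c - α - β + j)) := by
    simp only [GammaSeq]
    generalize (∏ j ∈ Finset.range (N + 1), (c - α + j)) = P3 at *
    generalize (∏ j ∈ Finset.range (N + 1), (c - β + j)) = P4 at *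
    generalize (∏ j ∈ Finset.range (N + 1), (c - α - β + j)) = P2 at *
    generalize (∏ j ∈ Finset.range (N + 1), (c + j)) = P1 at *
    rw [div_mul_div_comm, div_mul_div_comm, div_div_div_eq, div_eq_div_iff (by positivity) (by positivity)]
    linear_combination (N.factorial : ℝ) ^ 2 * (P3 * P4) * (P1 * P2) * e
  rw [key, div_mul_eq_mul_div, eq_div_iff (by positivity), mul_comm]
  exact hi

lemma hs_congr {f g : ℕ → ℝ} {S : ℝ} (h : HasSum f S) (e : ∀ m, g m = f m) : HasSum g S := by
  rwa [show g = f from funext e]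

lemma ps_summable (a : ℕ → ℝ) (C : ℝ) (ha : ∀ m, |a m| ≤ C) (s : ℝ) (hs : |s| < 1) :
    Summable (fun m => a m * s ^ m) := by
  refine Summable.of_norm_bounded (g := fun m => C * |s| ^ m)
    ((summable_geometric_of_lt_one (abs_nonneg _) hs).mul_left C) (fun m => ?_)
  rw [norm_mul, norm_pow, norm_eq_abs, norm_eq_abs]
  exact mul_le_mul_of_nonneg_right (ha m) (by positivity)

lemma ps_summable' (a : ℕ → ℝ) (C : ℝ) (ha : ∀ m, |a m| ≤ C) (s : ℝ) (hs : |s| < 1) :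
    Summable (fun m : ℕ => (m + 1 : ℝ) * a (m + 1) * s ^ m) := by
  have h1 : Summable (fun m : ℕ => C * ((m : ℝ) ^ 1 * |s| ^ m + |s| ^ m)) :=
    ((summable_pow_mul_geometric_of_norm_lt_one 1 (by simpa using hs)).add
      (summable_geometric_of_lt_one (abs_nonneg _) hs)).mul_left C
  refine Summable.of_norm_bounded h1 (fun m => ?_)
  rw [norm_mul, norm_mul, norm_pow, norm_eq_abs, norm_eq_abs, norm_eq_abs,
    abs_of_nonneg (by positivity : (0 : ℝ) ≤ m + 1)]
  have : (m + 1 : ℝ) * |a (m + 1)| * |s| ^ m ≤ (m + 1) * C * |s| ^ m := by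
    gcongr
    exact ha _
  refine this.trans (le_of_eq ?_)
  ring

lemma ps_deriv (a : ℕ → ℝ) (C : ℝ) (ha : ∀ m, |a m| ≤ C) (s : ℝ) (hs : |s| < 1) :
    HasDerivAt (fun z => ∑' m, a m * z ^ m) (∑' m : ℕ, (m + 1 : ℝ) * a (m + 1) * s ^ m) s := by
  obtain ⟨ρ, h1, h2⟩ := exists_between hs
  have hρ : 0 < ρ := (abs_nonneg s).trans_lt h1
  have hC : 0 ≤ C := (abs_nonneg _).trans (ha 0)
  have hu : Summable (fun m : ℕ => C * (m * ρ ^ (m - 1))) := by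
    rw [← summable_nat_add_iff 1]
    have := ps_summable' (fun _ => C) C (fun _ => by rw [abs_of_nonneg hC]) ρ
      (by rwa [abs_of_pos hρ])
    refine this.congr (fun m => ?_)
    simp only [Nat.add_sub_cancel]
    push_cast
    ring
  have key := hasDerivAt_tsum_of_isPreconnected (𝕜 := ℝ) (F := ℝ) (t := Ioo (-ρ) ρ) (y₀ := 0) (y := s)
    (g := fun m z => a m * z ^ m) (g' := fun m z => a m * (m * z ^ (m - 1))) hu isOpen_Ioo
    isPreconnected_Ioo (fun m y _ => (hasDerivAt_pow m y).const_mul (a m)) ?_ ⟨by linarith, hρ⟩ ?_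
    (abs_lt.1 h1)
  · have hsm : Summable (fun m : ℕ => a m * (m * s ^ (m - 1))) := by
      rw [← summable_nat_add_iff 1]
      refine (ps_summable' a C ha s hs).congr (fun m => ?_)
      simp only [Nat.add_sub_cancel]
      push_cast
      ring
    have e : ∑' m : ℕ, a m * (m * s ^ (m - 1)) = ∑' m : ℕ, (m + 1 : ℝ) * a (m + 1) * s ^ m := by
      rw [hsm.tsum_eq_zero_add]
      simp only [Nat.cast_zero, zero_mul, mul_zero, zero_add, Nat.add_sub_cancel]
      refine tsum_congr (fun m => ?_)
      push_cast
      ring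
    rw [← e]
    exact key
  · intro m y hy
    rw [norm_mul, norm_mul, norm_pow, norm_eq_abs, norm_eq_abs, norm_eq_abs, Nat.abs_cast]
    have hy' : |y| ≤ ρ := (abs_lt.2 hy).le
    gcongr
    exact ha _
  · exact ps_summable a C ha 0 (by simp)

lemma hasSum_shift (d : ℕ → ℝ) (s S : ℝ) (h : HasSum (fun m => d (m + 1) * s ^ m) S) (h0 : d 0 = 0) :
    HasSum (fun m => d m * s ^ m) (s * S) := by
  have := (hasSum_nat_add_iff (f := fun m => d m * s ^ m) (g := s * S) 1).1 (by
    refine hs_congr (h.mul_left s) ?_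
    intro m
    ring)
  simpa [h0] using this

/-- the hypergeometric function -/
def HF (α β c s : ℝ) : ℝ := ∑' m, hc α β c m * s ^ m
/-- its derivative -/
def HF1 (α β c s : ℝ) : ℝ := ∑' m : ℕ, (m + 1 : ℝ) * hc α β c (m + 1) * s ^ m
/-- its second derivative -/
def HF2 (α β c s : ℝ) : ℝ :=
  ∑' m : ℕ, (m + 1 : ℝ) * (((m + 1 : ℕ) + 1 : ℝ) * hc α β c (m + 1 + 1)) * s ^ m

lemma HF_zero (α β c : ℝ) : HF α β c 0 = 1 := by
  unfold HF
  rw [tsum_eq_single 0]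
  · simp [hc_zero]
  · intro m hm; simp [hm]

lemma hc_bounds (α β c : ℝ) (hcpos : 0 < c) (hδ : 0 < c - α - β) :
    ∃ C, (∀ m, |hc α β c m| ≤ C) ∧ ∀ m : ℕ, |(m + 1 : ℝ) * hc α β c (m + 1)| ≤ C := by
  obtain ⟨C, hC⟩ := (hc_decay α β c hcpos hδ).2.bddAbove_range
  refine ⟨max C 1, fun m => ?_, fun m => ?_⟩
  · cases m with
    | zero => simp [hc_zero]
    | succ m =>
      have := hC ⟨m + 1, rfl⟩
      simp only at this
      refine le_trans ?_ (this.trans (le_max_left _ _))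
      push_cast
      have := mul_nonneg (Nat.cast_nonneg (α := ℝ) m) (abs_nonneg (hc α β c (m + 1)))
      linarith
  · have := hC ⟨m + 1, rfl⟩
    simp only at this
    rw [abs_mul, abs_of_nonneg (by positivity)]
    push_cast at this
    exact this.trans (le_max_left _ _)

lemma HF_deriv (α β c : ℝ) (hcpos : 0 < c) (hδ : 0 < c - α - β) (s : ℝ) (hs : |s| < 1) :
    HasDerivAt (HF α β c) (HF1 α β c s) s ∧ HasDerivAt (HF1 α β c) (HF2 α β c s) s := by
  obtain ⟨C, h1, h2⟩ := hc_bounds α β c hcpos hδ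
  refine ⟨ps_deriv _ C h1 s hs, ?_⟩
  exact ps_deriv (fun m : ℕ => (m + 1 : ℝ) * hc α β c (m + 1)) C h2 s hs

lemma HF_ode (α β c : ℝ) (hcpos : 0 < c) (hδ : 0 < c - α - β) (s : ℝ) (hs : |s| < 1) :
    s * (1 - s) * HF2 α β c s + (c - (α + β + 1) * s) * HF1 α β c s - α * β * HF α β c s = 0 := by
  obtain ⟨C, h1, h2⟩ := hc_bounds α β c hcpos hδ
  have s0 : HasSum (fun m => hc α β c m * s ^ m) (HF α β c s) := (ps_summable _ C h1 s hs).hasSum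
  have s1 : HasSum (fun m : ℕ => (m + 1 : ℝ) * hc α β c (m + 1) * s ^ m) (HF1 α β c s) :=
    (ps_summable' _ C h1 s hs).hasSum
  have s2 : HasSum (fun m : ℕ => (m + 1 : ℝ) * (((m + 1 : ℕ) + 1 : ℝ) * hc α β c (m + 1 + 1)) * s ^ m)
      (HF2 α β c s) :=
    (ps_summable' (fun m : ℕ => (m + 1 : ℝ) * hc α β c (m + 1)) C h2 s hs).hasSum
  have t1 := hasSum_shift (fun m : ℕ => (m : ℝ) * hc α β c m) s _ (by simpa using s1) (by simp)
  have t2 := hasSum_shift (fun m : ℕ => (m : ℝ) * ((m + 1 : ℝ) * hc α β c (m + 1))) s _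
    (by simpa using s2) (by simp)
  have t3 := hasSum_shift (fun m : ℕ => (m : ℝ) * ((m - 1 : ℝ) * hc α β c m)) s (s * HF2 α β c s)
    (by
      refine hs_congr t2 ?_
      intro m
      push_cast
      ring) (by simp)
  have tot := (((t2.sub t3).add (s1.mul_left c)).sub (t1.mul_left (α + β + 1))).sub (s0.mul_left (α * β))
  have z : HasSum (fun _ : ℕ => (0 : ℝ)) 0 := hasSum_zero
  have := tot.unique (hs_congr z (fun m => ?_))
  · linarith
  · have := hc_rec α β c hcpos m
    linear_combination s ^ m * this

lemma HF_lim (α β c : ℝ) (hcpos : 0 < c) (hδ : 0 < c - α - β) :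
    Tendsto (HF α β c) (nhdsWithin 1 (Iio 1)) (nhds (∑' m, hc α β c m)) := by
  apply tendsto_tsum_of_dominated_convergence (hc_decay α β c hcpos hδ).1
  · intro m
    have : Continuous (fun s : ℝ => hc α β c m * s ^ m) := by fun_prop
    have h := (this.tendsto 1).mono_left (nhdsWithin_le_nhds (s := Iio 1))
    simpa using h
  · have : Ioo (0 : ℝ) 1 ∈ nhdsWithin (1 : ℝ) (Iio 1) := Ioo_mem_nhdsLT (by norm_num)
    filter_upwards [this] with s hs m
    rw [norm_mul, norm_pow, norm_eq_abs, norm_eq_abs, abs_of_pos hs.1]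
    exact mul_le_of_le_one_right (abs_nonneg _) (pow_le_one₀ hs.1.le hs.2.le)

lemma hd_of {f g : ℝ → ℝ} {d d' x : ℝ} (h : HasDerivAt f d x) (e : ∀ y, g y = f y) (e' : d' = d) :
    HasDerivAt g d' x := by
  rw [show g = f from funext e, e']
  exact h

lemma w_deriv (b r : ℝ) (h0 : 0 ≤ r) (h1 : r < 1) :
    HasDerivAt (fun x : ℝ => (1 - x ^ 2) ^ b) (-2 * r * b / (1 - r ^ 2) * (1 - r ^ 2) ^ b) r := by
  have hp : 0 < 1 - r ^ 2 := by nlinarith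
  have h : HasDerivAt (fun x : ℝ => 1 - x ^ 2) (-(2 * r)) r := by
    simpa using (hasDerivAt_pow 2 r).const_sub 1
  have := h.rpow_const (p := b) (Or.inl hp.ne')
  refine hd_of this (fun _ => rfl) ?_
  rw [rpow_sub_one hp.ne']
  field_simp

lemma phi_ne_zero (q K : ℕ) (hK : 1 ≤ K) (hKM : K ≤ q + 1) (b : ℝ) (φ φ1 φ2 : ℝ → ℝ)
    (d1 : ∀ r ∈ Ico (0 : ℝ) 1, HasDerivAt φ (φ1 r) r)
    (d2 : ∀ r ∈ Ico (0 : ℝ) 1, HasDerivAt φ1 (φ2 r) r)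
    (ode : ∀ r ∈ Ioo (0 : ℝ) 1, φ2 r + ((q + 2) / r - 2 * b * r / (1 - r ^ 2)) * φ1 r
      - 2 * b * K / (1 - r ^ 2) * φ r = 0)
    (h0 : φ 0 = 1) : ∀ r ∈ Ioo (0 : ℝ) 1, φ r ≠ 0 := by
  set E : ℝ → ℝ := fun r => r ^ (q + 1) * (1 - r ^ 2) ^ b * (φ r * (K * φ r + r * φ1 r)) with hE
  have dE : ∀ r ∈ Ico (0 : ℝ) 1, HasDerivAt E
      (((q + 1 : ℕ) * r ^ q * (1 - r ^ 2) ^ b + r ^ (q + 1) * (-2 * r * b / (1 - r ^ 2) * (1 - r ^ 2) ^ b)) * (φ r * (K * φ r + r * φ1 r)) +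
        r ^ (q + 1) * (1 - r ^ 2) ^ b * (φ1 r * (K * φ r + r * φ1 r) + φ r * (K * φ1 r + (1 * φ1 r + r * φ2 r)))) r := by
    intro r hr
    have := ((hasDerivAt_pow (q + 1) r).mul (w_deriv b r hr.1 hr.2)).mul
      ((d1 r hr).mul (((d1 r hr).const_mul (K : ℝ)).add ((hasDerivAt_id r).mul (d2 r hr))))
    exact this
  have E' : ∀ r ∈ Ioo (0 : ℝ) 1, HasDerivAt E
      (r ^ q * (1 - r ^ 2) ^ b * ((K * φ r + r * φ1 r) ^ 2 + K * (q + 1 - K) * φ r ^ 2)) r := by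
    intro r hr
    refine hd_of (dE r ⟨hr.1.le, hr.2⟩) (fun _ => rfl) ?_
    have hp : 1 - r ^ 2 ≠ 0 := by nlinarith [hr.1, hr.2]
    have hr0 : r ≠ 0 := hr.1.ne'
    have o := ode r hr
    have o2 : φ2 r = - (((q + 2) / r - 2 * b * r / (1 - r ^ 2)) * φ1 r)
      + 2 * b * K / (1 - r ^ 2) * φ r := by linarith
    rw [o2, pow_succ]
    generalize (1 - r ^ 2) ^ b = w
    push_cast
    field_simp
    ring
  have mE : MonotoneOn E (Ico 0 1) := by
    apply monotoneOn_of_deriv_nonneg (convex_Ico 0 1)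
    · exact fun r hr => (dE r hr).continuousAt.continuousWithinAt
    · intro r hr
      rw [interior_Ico] at hr
      exact (E' r hr).differentiableAt.differentiableWithinAt
    · intro r hr
      rw [interior_Ico] at hr
      rw [(E' r hr).deriv]
      have hp : 0 < 1 - r ^ 2 := by nlinarith [hr.1, hr.2]
      have h1 : (0 : ℝ) ≤ q + 1 - K := by
        have : (K : ℝ) ≤ q + 1 := by exact_mod_cast hKM
        linarith
      have := hr.1
      have := rpow_pos_of_pos hp b
      positivity
  have E0 : E 0 = 0 := by simp [hE]
  have Epos : ∀ r ∈ Ioo (0 : ℝ) 1, 0 ≤ φ r * (K * φ r + r * φ1 r) := by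
    intro r hr
    have h := mE ⟨le_rfl, one_pos⟩ ⟨hr.1.le, hr.2⟩ hr.1.le
    rw [E0] at h
    have hp : 0 < 1 - r ^ 2 := by nlinarith [hr.1, hr.2]
    have h2 : 0 < r ^ (q + 1) * (1 - r ^ 2) ^ b := mul_pos (pow_pos hr.1 _) (rpow_pos_of_pos hp b)
    exact nonneg_of_mul_nonneg_right h h2
  obtain ⟨p, rfl⟩ : ∃ p, K = p + 1 := ⟨K - 1, by omega⟩
  set G : ℝ → ℝ := fun r => (r ^ (p + 1) * φ r) ^ 2 with hG
  have dG : ∀ r ∈ Ico (0 : ℝ) 1, HasDerivAt G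
      (2 * r ^ (2 * p + 1) * (φ r * ((p + 1 : ℕ) * φ r + r * φ1 r))) r := by
    intro r hr
    have := ((hasDerivAt_pow (p + 1) r).mul (d1 r hr)).pow 2
    refine hd_of this (fun _ => rfl) ?_
    simp only [Pi.mul_apply, Nat.add_sub_cancel]
    push_cast
    ring
  have mG : MonotoneOn G (Ico 0 1) := by
    apply monotoneOn_of_deriv_nonneg (convex_Ico 0 1)
    · exact fun r hr => (dG r hr).continuousAt.continuousWithinAt
    · intro r hr
      rw [interior_Ico] at hr
      exact (dG r ⟨hr.1.le, hr.2⟩).differentiableAt.differentiableWithinAt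
    · intro r hr
      rw [interior_Ico] at hr
      rw [(dG r ⟨hr.1.le, hr.2⟩).deriv]
      have := hr.1
      exact mul_nonneg (by positivity) (Epos r hr)
  intro r hr hz
  have hev : ∀ᶠ x in nhdsWithin (0 : ℝ) (Ioi 0), φ x ≠ 0 :=
    ((d1 0 ⟨le_rfl, one_pos⟩).continuousAt.eventually_ne (by rw [h0]; norm_num)).filter_mono
      nhdsWithin_le_nhds
  obtain ⟨x, hx, hxr⟩ := (hev.and (Ioo_mem_nhdsGT hr.1)).exists
  have h := mG ⟨hxr.1.le, hxr.2.trans hr.2⟩ ⟨hr.1.le, hr.2⟩ hxr.2.le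
  simp only [hG, hz] at h
  have h3 : 0 < (x ^ (p + 1) * φ x) ^ 2 := by
    have := pow_pos hxr.1 (p + 1)
    positivity
  rw [mul_zero, zero_pow two_ne_zero] at h
  linarith

lemma uniq (q K : ℕ) (hK : 1 ≤ K) (hKM : K ≤ q + 1) (b : ℝ) (φ φ1 φ2 : ℝ → ℝ)
    (d1 : ∀ r ∈ Ico (0 : ℝ) 1, HasDerivAt φ (φ1 r) r)
    (d2 : ∀ r ∈ Ico (0 : ℝ) 1, HasDerivAt φ1 (φ2 r) r)
    (ode : ∀ r ∈ Ioo (0 : ℝ) 1, φ2 r + ((q + 2) / r - 2 * b * r / (1 - r ^ 2)) * φ1 r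
      - 2 * b * K / (1 - r ^ 2) * φ r = 0)
    (h0 : φ 0 = 1) (Y Y1 Y2 : ℝ → ℝ)
    (D1 : ∀ r ∈ Ioo (0 : ℝ) 1, HasDerivAt Y (Y1 r) r)
    (D2 : ∀ r ∈ Ioo (0 : ℝ) 1, HasDerivAt Y1 (Y2 r) r)
    (Ode : ∀ r ∈ Ioo (0 : ℝ) 1, Y2 r + ((q + 2) / r - 2 * b * r / (1 - r ^ 2)) * Y1 r
      - 2 * b * K / (1 - r ^ 2) * Y r = 0)
    (B δ : ℝ) (hδ : 0 < δ) (hB : ∀ r ∈ Ioo 0 δ, |Y r| ≤ B) :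
    ∃ C, ∀ r ∈ Ioo (0 : ℝ) 1, Y r = C * φ r := by
  have hne := phi_ne_zero q K hK hKM b φ φ1 φ2 d1 d2 ode h0
  set W : ℝ → ℝ := fun r => r ^ (q + 2) * (1 - r ^ 2) ^ b * (Y1 r * φ r - Y r * φ1 r) with hW
  have dW : ∀ r ∈ Ioo (0 : ℝ) 1, HasDerivAt W 0 r := by
    intro r hr
    have hr' : r ∈ Ico (0 : ℝ) 1 := ⟨hr.1.le, hr.2⟩
    have := ((hasDerivAt_pow (q + 2) r).mul (w_deriv b r hr.1.le hr.2)).mul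
      (((D2 r hr).mul (d1 r hr')).sub ((D1 r hr).mul (d2 r hr')))
    refine hd_of this (fun _ => rfl) ?_
    have hp : 1 - r ^ 2 ≠ 0 := by nlinarith [hr.1, hr.2]
    have hr0 : r ≠ 0 := hr.1.ne'
    have o := ode r hr
    have o2 : φ2 r = - (((q + 2) / r - 2 * b * r / (1 - r ^ 2)) * φ1 r)
      + 2 * b * K / (1 - r ^ 2) * φ r := by linarith
    have O := Ode r hr
    have O2 : Y2 r = - (((q + 2) / r - 2 * b * r / (1 - r ^ 2)) * Y1 r)
      + 2 * b * K / (1 - r ^ 2) * Y r := by linarith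
    rw [o2, O2]
    simp only [Pi.mul_apply, Pi.sub_apply]
    generalize (1 - r ^ 2) ^ b = w
    push_cast
    rw [pow_succ r (q + 1)]
    field_simp
    ring
  obtain ⟨w, hw⟩ := isOpen_Ioo.exists_is_const_of_deriv_eq_zero (f := W) (s := Ioo (0 : ℝ) 1)
    isPreconnected_Ioo (fun r hr => (dW r hr).differentiableAt.differentiableWithinAt)
    (fun r hr => (dW r hr).deriv)
  have hsub : Icc (0 : ℝ) (1 / 2) ⊆ Ico 0 1 := fun r hr => ⟨hr.1, by linarith [hr.2]⟩
  have bd : ∀ f f' : ℝ → ℝ, (∀ r ∈ Ico (0 : ℝ) 1, HasDerivAt f (f' r) r) →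
      ∃ C, ∀ r ∈ Icc (0 : ℝ) (1 / 2), ‖f r‖ ≤ C := fun f f' hf =>
    isCompact_Icc.exists_bound_of_continuousOn
      (fun r hr => (hf r (hsub hr)).continuousAt.continuousWithinAt)
  obtain ⟨C1, hC1⟩ := bd φ φ1 d1
  obtain ⟨C2, hC2⟩ := bd φ1 φ2 d2
  obtain ⟨C3, hC3⟩ := bd _ _ (fun r hr => w_deriv b r hr.1 hr.2)
  have hC1' : 0 ≤ C1 := (norm_nonneg _).trans (hC1 0 ⟨le_rfl, by norm_num⟩)
  have hC2' : 0 ≤ C2 := (norm_nonneg _).trans (hC2 0 ⟨le_rfl, by norm_num⟩)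
  have hC3' : 0 ≤ C3 := (norm_nonneg _).trans (hC3 0 ⟨le_rfl, by norm_num⟩)
  have hB0 : 0 ≤ B := (abs_nonneg _).trans (hB (δ / 2) ⟨by linarith, by linarith⟩)
  have hw0 : w = 0 := by
    have bound : ∀ r : ℝ, 0 < r → 2 * r < δ → 2 * r ≤ 1 / 2 →
        |w| ≤ C3 * (4 * B * C1 + B * C2) * (2 * r) := by
      intro r hr h1 h2
      obtain ⟨ξ, hξ, hs⟩ := exists_hasDerivAt_eq_slope Y Y1 (a := r) (b := 2 * r) (by linarith)
        (fun x hx => (D1 x ⟨by linarith [hx.1], by linarith [hx.2]⟩).continuousAt.continuousWithinAt)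
        (fun x hx => D1 x ⟨by linarith [hx.1], by linarith [hx.2]⟩)
      have x0 : 0 < ξ := hr.trans hξ.1
      have x1 : ξ ≤ 1 / 2 := by linarith [hξ.2]
      have hy : |ξ * Y1 ξ| ≤ 4 * B := by
        rw [abs_mul, hs, abs_div, abs_of_pos x0, show 2 * r - r = r by ring, abs_of_pos hr]
        have e1 := hB r ⟨hr, by linarith⟩
        have e2 := hB (2 * r) ⟨by linarith, h1⟩
        have e3 : |Y (2 * r) - Y r| ≤ 2 * B := by
          have := abs_sub (Y (2 * r)) (Y r)
          linarith
        rw [← mul_div_assoc, div_le_iff₀ hr]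
        nlinarith [hξ.2, abs_nonneg (Y (2 * r) - Y r)]
      have b1 := hC1 ξ ⟨x0.le, x1⟩
      have b2 := hC2 ξ ⟨x0.le, x1⟩
      have b3 := hC3 ξ ⟨x0.le, x1⟩
      have b4 := hB ξ ⟨x0, by linarith [hξ.2]⟩
      rw [norm_eq_abs] at b1 b2 b3
      rw [← hw ξ ⟨x0, by linarith⟩]
      have e : W ξ = (1 - ξ ^ 2) ^ b * ((ξ * Y1 ξ) * φ ξ - ξ * (Y ξ * φ1 ξ)) * ξ ^ (q + 1) := by
        simp only [hW]; ring
      rw [e, abs_mul, abs_mul]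
      have t1 : |ξ * Y1 ξ * φ ξ - ξ * (Y ξ * φ1 ξ)| ≤ 4 * B * C1 + B * C2 := by
        refine (abs_sub _ _).trans ?_
        rw [abs_mul (ξ * Y1 ξ), abs_mul ξ (Y ξ * φ1 ξ), abs_mul (Y ξ), abs_of_pos x0]
        have u1 : |ξ * Y1 ξ| * |φ ξ| ≤ 4 * B * C1 := mul_le_mul hy b1 (abs_nonneg _) (by positivity)
        have u2 : |Y ξ| * |φ1 ξ| ≤ B * C2 := mul_le_mul b4 b2 (abs_nonneg _) (by positivity)
        have u3 : ξ * (|Y ξ| * |φ1 ξ|) ≤ 1 * (B * C2) :=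
          mul_le_mul (by linarith) u2 (by positivity) (by norm_num)
        linarith
      have t2 : |ξ ^ (q + 1)| ≤ 2 * r := by
        rw [abs_of_pos (pow_pos x0 _), pow_succ]
        have : ξ ^ q ≤ 1 := pow_le_one₀ x0.le (by linarith)
        nlinarith [hξ.2]
      exact mul_le_mul (mul_le_mul b3 t1 (abs_nonneg _) hC3') t2 (abs_nonneg _) (by positivity)
    have ht : Tendsto (fun r : ℝ => C3 * (4 * B * C1 + B * C2) * (2 * r))
        (nhdsWithin 0 (Ioi 0)) (nhds 0) := by
      have : Continuous (fun r : ℝ => C3 * (4 * B * C1 + B * C2) * (2 * r)) := by fun_prop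
      have h := (this.tendsto 0).mono_left (nhdsWithin_le_nhds (s := Ioi 0))
      simpa using h
    have hle : |w| ≤ 0 := by
      refine ge_of_tendsto ht ?_
      filter_upwards [Ioo_mem_nhdsGT (show (0 : ℝ) < min (δ / 2) (1 / 4) by positivity)] with r hr
      have h1 := hr.2.trans_le (min_le_left _ _)
      have h2 := hr.2.trans_le (min_le_right _ _)
      exact bound r hr.1 (by linarith) (by linarith)
    exact abs_nonpos_iff.1 hle
  have dq : ∀ r ∈ Ioo (0 : ℝ) 1, HasDerivAt (fun x => Y x / φ x) 0 r := by
    intro r hr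
    have := (D1 r hr).div (d1 r ⟨hr.1.le, hr.2⟩) (hne r hr)
    refine hd_of this (fun _ => rfl) ?_
    have h := hw r hr
    rw [hw0] at h
    have hp : 0 < 1 - r ^ 2 := by nlinarith [hr.1, hr.2]
    have h2 : r ^ (q + 2) * (1 - r ^ 2) ^ b ≠ 0 :=
      (mul_pos (pow_pos hr.1 _) (rpow_pos_of_pos hp b)).ne'
    rw [(mul_eq_zero.1 h).resolve_left h2, zero_div]
  obtain ⟨C, hC⟩ := isOpen_Ioo.exists_is_const_of_deriv_eq_zero (f := fun x => Y x / φ x)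
    (s := Ioo (0 : ℝ) 1)
    isPreconnected_Ioo (fun r hr => (dq r hr).differentiableAt.differentiableWithinAt)
    (fun r hr => (dq r hr).deriv)
  refine ⟨C, fun r hr => ?_⟩
  have := hC r hr
  rwa [div_eq_iff (hne r hr)] at this

lemma phi_facts (q K : ℕ) (α β c b : ℝ) (hb : b < 1) (hcc : c = (q + 3) / 2)
    (hsum : α + β = c - 1 + b) (hprod : α * β = b * K / 2) :
    (∀ r ∈ Ico (0 : ℝ) 1, HasDerivAt (fun r => HF α β c (r ^ 2)) (2 * r * HF1 α β c (r ^ 2)) r) ∧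
    (∀ r ∈ Ico (0 : ℝ) 1, HasDerivAt (fun r => 2 * r * HF1 α β c (r ^ 2))
      (2 * HF1 α β c (r ^ 2) + 4 * r ^ 2 * HF2 α β c (r ^ 2)) r) ∧
    (∀ r ∈ Ioo (0 : ℝ) 1, (2 * HF1 α β c (r ^ 2) + 4 * r ^ 2 * HF2 α β c (r ^ 2)) +
      ((q + 2) / r - 2 * b * r / (1 - r ^ 2)) * (2 * r * HF1 α β c (r ^ 2))
      - 2 * b * K / (1 - r ^ 2) * HF α β c (r ^ 2) = 0) := by
  have hc0 : 0 < c := by rw [hcc]; positivity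
  have hδ : 0 < c - α - β := by linarith
  have hsq : ∀ r ∈ Ico (0 : ℝ) 1, |r ^ 2| < 1 := by
    intro r hr
    rw [abs_of_nonneg (sq_nonneg r)]
    nlinarith [hr.1, hr.2]
  refine ⟨fun r hr => ?_, fun r hr => ?_, fun r hr => ?_⟩
  · have := HasDerivAt.comp (h := fun x : ℝ => x ^ 2) r
      (HF_deriv α β c hc0 hδ (r ^ 2) (hsq r hr)).1 (hasDerivAt_pow 2 r)
    refine hd_of this (fun _ => rfl) ?_
    simp
    ring
  · have h := HasDerivAt.comp (h := fun x : ℝ => x ^ 2) r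
      (HF_deriv α β c hc0 hδ (r ^ 2) (hsq r hr)).2 (hasDerivAt_pow 2 r)
    have := ((hasDerivAt_id r).const_mul 2).mul h
    refine hd_of this (fun _ => rfl) ?_
    simp
    ring
  · have h := HF_ode α β c hc0 hδ (r ^ 2) (hsq r ⟨hr.1.le, hr.2⟩)
    rw [hsum, hprod, hcc] at h
    rw [hcc]
    have hp : 1 - r ^ 2 ≠ 0 := by nlinarith [hr.1, hr.2]
    have hr0 : r ≠ 0 := hr.1.ne'
    generalize HF α β ((q + 3) / 2) (r ^ 2) = A0 at *
    generalize HF1 α β ((q + 3) / 2) (r ^ 2) = A1 at *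
    generalize HF2 α β ((q + 3) / 2) (r ^ 2) = A2 at *
    field_simp
    linear_combination 4 * h

lemma final_alg (t g1 g2 g3 g4 g5 g6 g7 P C U V : ℝ) (h1 : 0 < g1) (h2 : 0 < g2) (h3 : 0 < g3)
    (h4 : 0 < g4) (h5 : 0 < g5) (h6 : 0 < g6) (hU : U = g5 * g6 / (g4 * g3))
    (hV : V = g5 * g7 / (g2 * g1)) (hC : C * U = 1) :
    t * (g7 / g6) * (g4 * g3 / (g1 * g2)) * P = t * (C * P * V) := by
  have hCv : C = g4 * g3 / (g5 * g6) := by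
    rw [hU] at hC
    field_simp at hC ⊢
    linarith
  rw [hV, hCv]
  field_simp

set_option maxHeartbeats 1000000

/-- **Boundary asymptotics of the weighted harmonic extension coefficients**
(Proposition on Gaussian hypergeometric limits). -/
theorem hypergeometric_derivative_limit (n : ℕ) (hn : 1 ≤ n) (k : ℕ) (hk : 1 ≤ k)
    (b : ℝ) (hb : b ∈ Set.Ioo (-1 : ℝ) 1)
    (α β : ℝ)
    (hroots : ∀ X : ℝ,
      X ^ 2 - (((n : ℝ) - 1) / 2 + k + b) * X + (k : ℝ) * b / 2 = (X - α) * (X - β))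
    (g : ℝ → ℝ) (hg : ContDiffOn ℝ 2 g (Set.Ioo 0 1))
    (hode : ∀ r ∈ Set.Ioo (0 : ℝ) 1,
      deriv (deriv g) r + ((n : ℝ) / r - 2 * b * r / (1 - r ^ 2)) * deriv g r -
        ((k : ℝ) * ((n : ℝ) + (k : ℝ) - 1) / r ^ 2) * g r = 0)
    (h0 : Asymptotics.IsBigO (nhdsWithin 0 (Set.Ioi 0)) g (fun r : ℝ => r ^ k))
    (h1 : Tendsto g (nhdsWithin 1 (Set.Iio 1)) (nhds 1)) :
    Tendsto (fun r : ℝ => ((1 - r ^ 2) / 2) ^ b * deriv g r) (nhdsWithin 1 (Set.Iio 1))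
      (nhds ((2 : ℝ) ^ (-b) * (Gamma (b + 1) / Gamma (1 - b)) *
        (Gamma (β + 1 - b) * Gamma (α + 1 - b) / (Gamma (α + 1) * Gamma (β + 1))) * k)) := by
  obtain ⟨p, rfl⟩ : ∃ p, k = p + 1 := ⟨k - 1, by omega⟩
  have hprod : α * β = b * ((p + 1 : ℕ) : ℝ) / 2 := by
    have := hroots 0
    linarith
  have hsum' : α + β = ((n : ℝ) - 1) / 2 + (p + 1 : ℕ) + b := by
    have := hroots 1
    linarith
  obtain ⟨c, hcc⟩ : ∃ c : ℝ, c = ((n + 2 * p : ℕ) + 3) / 2 := ⟨_, rfl⟩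
  have hn' : (1 : ℝ) ≤ n := by exact_mod_cast hn
  have hp0 : (0 : ℝ) ≤ p := by positivity
  have hc0 : 0 < c := by rw [hcc]; positivity
  have hsum : α + β = c - 1 + b := by rw [hsum', hcc]; push_cast; ring
  have hsum2 : (α - b) + (β - b) = c - 1 + (-b) := by linarith
  have hprod2 : (α - b) * (β - b) = (-b) * ((n + p : ℕ) : ℝ) / 2 := by
    have : (α - b) * (β - b) = α * β - b * (α + β) + b ^ 2 := by ring
    rw [this, hprod, hsum']
    push_cast
    ring
  obtain ⟨hb1, hb2⟩ := hb
  have both : ∀ x y : ℝ, 0 < x * y → 0 < x + y → 0 < x ∧ 0 < y := by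
    intro x y h1 h2
    rcases pos_and_pos_or_neg_and_neg_of_mul_pos h1 with h | h
    · exact h
    · linarith [h.1, h.2]
  have pos1 : 0 < α + 1 ∧ 0 < β + 1 := by
    apply both
    · have : (α + 1) * (β + 1) = α * β + (α + β) + 1 := by ring
      rw [this, hprod, hsum']
      push_cast
      nlinarith
    · have : α + 1 + (β + 1) = α + β + 2 := by ring
      rw [this, hsum']
      push_cast
      linarith
  have pos2 : 0 < α + 1 - b ∧ 0 < β + 1 - b := by
    apply both
    · have : (α + 1 - b) * (β + 1 - b) = (α - b) * (β - b) + ((α - b) + (β - b)) + 1 := by ring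
      rw [this, hprod2, hsum2, hcc]
      push_cast
      nlinarith
    · have : α + 1 - b + (β + 1 - b) = (α - b) + (β - b) + 2 := by ring
      rw [this, hsum2]
      linarith
  have G1 := gauss α β c hc0 (by linarith) (by linarith) (by linarith)
  have G2 := gauss (α - b) (β - b) c hc0 (by linarith) (by linarith) (by linarith)
  rw [show c - α - β = 1 - b by linarith, show c - α = β + 1 - b by linarith,
    show c - β = α + 1 - b by linarith] at G1
  rw [show c - (α - b) - (β - b) = b + 1 by linarith, show c - (α - b) = β + 1 by linarith,
    show c - (β - b) = α + 1 by linarith] at G2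
  obtain ⟨d1, d2, ode⟩ := phi_facts (n + 2 * p) (p + 1) α β c b hb2 hcc hsum hprod
  obtain ⟨e1, e2, ode'⟩ := phi_facts (n + 2 * p) (n + p) (α - b) (β - b) c (-b) (by linarith) hcc
    hsum2 hprod2
  have L1 := HF_lim α β c hc0 (by linarith)
  have L2 := HF_lim (α - b) (β - b) c hc0 (by linarith)
  have hsq : Tendsto (fun r : ℝ => r ^ 2) (nhdsWithin 1 (Iio 1)) (nhdsWithin 1 (Iio 1)) := by
    apply tendsto_nhdsWithin_of_tendsto_nhds_of_eventually_within
    · have : Continuous (fun r : ℝ => r ^ 2) := by fun_prop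
      have h := (this.tendsto 1).mono_left (nhdsWithin_le_nhds (s := Iio 1))
      simpa using h
    · filter_upwards [Ioo_mem_nhdsLT (show (0 : ℝ) < 1 by norm_num)] with r hr
      simp only [mem_Iio]
      nlinarith [hr.1, hr.2]
  replace L1 := L1.comp hsq
  replace L2 := L2.comp hsq
  have z1 : HF α β c ((0 : ℝ) ^ 2) = 1 := by rw [zero_pow two_ne_zero]; exact HF_zero _ _ _
  have z2 : HF (α - b) (β - b) c ((0 : ℝ) ^ 2) = 1 := by
    rw [zero_pow two_ne_zero]; exact HF_zero _ _ _
  obtain ⟨φ, hφ⟩ : ∃ φ : ℝ → ℝ, φ = fun r => HF α β c (r ^ 2) := ⟨_, rfl⟩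
  obtain ⟨φ1, hφ1⟩ : ∃ φ : ℝ → ℝ, φ = fun r => 2 * r * HF1 α β c (r ^ 2) := ⟨_, rfl⟩
  obtain ⟨φ2, hφ2⟩ : ∃ φ : ℝ → ℝ,
    φ = fun r => 2 * HF1 α β c (r ^ 2) + 4 * r ^ 2 * HF2 α β c (r ^ 2) := ⟨_, rfl⟩
  have d1' : ∀ r ∈ Ico (0 : ℝ) 1, HasDerivAt φ (φ1 r) r := by rw [hφ, hφ1]; exact d1
  have d2' : ∀ r ∈ Ico (0 : ℝ) 1, HasDerivAt φ1 (φ2 r) r := by rw [hφ1, hφ2]; exact d2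
  have odeφ : ∀ r ∈ Ioo (0 : ℝ) 1, φ2 r + (((n + 2 * p : ℕ) + 2) / r - 2 * b * r / (1 - r ^ 2)) * φ1 r
      - 2 * b * (p + 1 : ℕ) / (1 - r ^ 2) * φ r = 0 := by rw [hφ, hφ1, hφ2]; exact ode
  have φ0 : φ 0 = 1 := by rw [hφ]; exact z1
  have φ10 : φ1 0 = 0 := by rw [hφ1]; simp
  obtain ⟨ψ, hψ⟩ : ∃ φ : ℝ → ℝ, φ = fun r => HF (α - b) (β - b) c (r ^ 2) := ⟨_, rfl⟩
  have Lφ : Tendsto φ (nhdsWithin 1 (Iio 1)) (nhds (∑' m, hc α β c m)) := by rw [hφ]; exact L1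
  have Lψ : Tendsto ψ (nhdsWithin 1 (Iio 1)) (nhds (∑' m, hc (α - b) (β - b) c m)) := by
    rw [hψ]; exact L2
  -- derivatives of g
  have gd1 : ∀ r ∈ Ioo (0 : ℝ) 1, HasDerivAt g (deriv g r) r := fun r hr =>
    ((hg.differentiableOn (by norm_num)).differentiableAt (isOpen_Ioo.mem_nhds hr)).hasDerivAt
  have gd2 : ∀ r ∈ Ioo (0 : ℝ) 1, HasDerivAt (deriv g) (deriv (deriv g) r) r := fun r hr => by
    have h : ContDiffOn ℝ 1 (deriv g) (Ioo 0 1) := hg.deriv_of_isOpen isOpen_Ioo (by norm_num)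
    exact ((h.differentiableOn (by norm_num)).differentiableAt (isOpen_Ioo.mem_nhds hr)).hasDerivAt
  -- the first uniqueness
  obtain ⟨C, hC⟩ : ∃ C, ∀ r ∈ Ioo (0 : ℝ) 1, g r / r ^ (p + 1) = C * φ r := by
    obtain ⟨B, hB⟩ := h0.bound
    obtain ⟨δ, hδ, hδB⟩ := (mem_nhdsGT_iff_exists_Ioo_subset).1 hB
    refine uniq (n + 2 * p) (p + 1) (by omega) (by omega) b φ φ1 φ2 d1' d2' odeφ φ0
      (fun r => g r / r ^ (p + 1))
      (fun r => deriv g r / r ^ (p + 1) - (p + 1) * (g r / r ^ (p + 2)))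
      (fun r => deriv (deriv g) r / r ^ (p + 1) - 2 * (p + 1) * (deriv g r / r ^ (p + 2))
        + (p + 1) * (p + 2) * (g r / r ^ (p + 3))) ?_ ?_ ?_ B δ hδ ?_
    · intro r hr
      have hr0 : r ≠ 0 := hr.1.ne'
      refine hd_of ((gd1 r hr).div (hasDerivAt_pow (p + 1) r) (pow_ne_zero _ hr0)) (fun _ => rfl) ?_
      simp only [Nat.add_sub_cancel]
      push_cast
      field_simp
      ring
    · intro r hr
      have hr0 : r ≠ 0 := hr.1.ne'
      refine hd_of (((gd2 r hr).div (hasDerivAt_pow (p + 1) r) (pow_ne_zero _ hr0)).sub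
        (((gd1 r hr).div (hasDerivAt_pow (p + 2) r) (pow_ne_zero _ hr0)).const_mul (p + 1 : ℝ)))
        (fun _ => rfl) ?_
      simp only [Nat.add_sub_cancel, show p + 2 - 1 = p + 1 by omega]
      push_cast
      field_simp
      ring
    · intro r hr
      have hr0 : r ≠ 0 := hr.1.ne'
      have hp : 1 - r ^ 2 ≠ 0 := by nlinarith [hr.1, hr.2]
      have o := hode r hr
      have o2 : deriv (deriv g) r = -(((n : ℝ) / r - 2 * b * r / (1 - r ^ 2)) * deriv g r) +
        (((p + 1 : ℕ) : ℝ) * ((n : ℝ) + ((p + 1 : ℕ) : ℝ) - 1) / r ^ 2) * g r := by linarith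
      simp only [o2]
      push_cast
      field_simp
      ring
    · intro r hr
      have h := hδB hr
      simp only [mem_ofPred_eq, norm_eq_abs] at h
      have hpp : 0 < r ^ (p + 1) := pow_pos hr.1 _
      rw [abs_div, div_le_iff₀ (abs_pos.2 hpp.ne')]
      exact h
  have hgC : ∀ r ∈ Ioo (0 : ℝ) 1, g r = C * (r ^ (p + 1) * φ r) := by
    intro r hr
    have := hC r hr
    rw [div_eq_iff (pow_ne_zero _ hr.1.ne')] at this
    rw [this]; ring
  have hg1 : ∀ r ∈ Ioo (0 : ℝ) 1, deriv g r = C * (r ^ p * ((p + 1) * φ r + r * φ1 r)) := by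
    intro r hr
    have h : HasDerivAt (fun x => C * (x ^ (p + 1) * φ x))
        (C * (r ^ p * ((p + 1) * φ r + r * φ1 r))) r := by
      refine hd_of (((hasDerivAt_pow (p + 1) r).mul (d1' r ⟨hr.1.le, hr.2⟩)).const_mul C)
        (fun _ => rfl) ?_
      simp only [Nat.add_sub_cancel]
      push_cast
      ring
    rw [← h.deriv]
    apply Filter.EventuallyEq.deriv_eq
    filter_upwards [isOpen_Ioo.mem_nhds hr] with x hx using hgC x hx
  -- the second uniqueness
  obtain ⟨H, hH⟩ : ∃ H : ℝ → ℝ, H = fun r => (1 - r ^ 2) ^ b * ((p + 1) * φ r + r * φ1 r) := ⟨_, rfl⟩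
  have dH : ∀ r ∈ Ico (0 : ℝ) 1, HasDerivAt H
      (-2 * r * b / (1 - r ^ 2) * (1 - r ^ 2) ^ b * ((p + 1) * φ r + r * φ1 r) +
        (1 - r ^ 2) ^ b * ((p + 1) * φ1 r + (1 * φ1 r + r * φ2 r))) r := by
    intro r hr
    rw [hH]
    exact (w_deriv b r hr.1 hr.2).mul
      (((d1' r hr).const_mul (p + 1 : ℝ)).add ((hasDerivAt_id r).mul (d2' r hr)))
  have H0 : H 0 = p + 1 := by rw [hH]; simp [φ0]
  have cH : Tendsto H (nhdsWithin 0 (Ioi 0)) (nhds (p + 1)) := by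
    have := (dH 0 ⟨le_rfl, one_pos⟩).continuousAt.tendsto
    rw [H0] at this
    exact this.mono_left nhdsWithin_le_nhds
  obtain ⟨C2, hC2⟩ : ∃ C2, ∀ r ∈ Ioo (0 : ℝ) 1, H r = C2 * ψ r := by
    have hB : ∀ᶠ r in nhdsWithin (0 : ℝ) (Ioi 0), |H r| < |(p + 1 : ℝ)| + 1 :=
      cH.abs.eventually_lt_const (by linarith)
    obtain ⟨δ, hδ, hδB⟩ := (mem_nhdsGT_iff_exists_Ioo_subset).1 hB
    rw [hψ]
    refine uniq (n + 2 * p) (n + p) (by omega) (by omega) (-b) _ _ _ e1 e2 ode' z2 H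
      (fun r => -(n + p) * ((1 - r ^ 2) ^ b * φ1 r))
      (fun r => -(n + p) * ((-2 * r * b / (1 - r ^ 2) * (1 - r ^ 2) ^ b) * φ1 r
        + (1 - r ^ 2) ^ b * φ2 r)) ?_ ?_ ?_ _ δ hδ (fun r hr => (hδB hr).le)
    · intro r hr
      have hr0 : r ≠ 0 := hr.1.ne'
      have hp : 1 - r ^ 2 ≠ 0 := by nlinarith [hr.1, hr.2]
      refine hd_of (dH r ⟨hr.1.le, hr.2⟩) (fun _ => rfl) ?_
      have o := odeφ r hr
      have o2 : φ2 r = -((((n + 2 * p : ℕ) + 2) / r - 2 * b * r / (1 - r ^ 2)) * φ1 r)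
        + 2 * b * (p + 1 : ℕ) / (1 - r ^ 2) * φ r := by linarith
      rw [o2]
      generalize (1 - r ^ 2) ^ b = w
      push_cast
      field_simp
      ring
    · intro r hr
      exact ((w_deriv b r hr.1.le hr.2).mul (d2' r ⟨hr.1.le, hr.2⟩)).const_mul _
    · intro r hr
      have hr0 : r ≠ 0 := hr.1.ne'
      have hp : 1 - r ^ 2 ≠ 0 := by nlinarith [hr.1, hr.2]
      have o := odeφ r hr
      have o2 : φ2 r = -((((n + 2 * p : ℕ) + 2) / r - 2 * b * r / (1 - r ^ 2)) * φ1 r)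
        + 2 * b * (p + 1 : ℕ) / (1 - r ^ 2) * φ r := by linarith
      rw [hH]
      simp only [o2]
      generalize (1 - r ^ 2) ^ b = w
      push_cast
      field_simp
      ring
  have hC2p : C2 = p + 1 := by
    have hψ0 : Tendsto ψ (nhdsWithin 0 (Ioi 0)) (nhds 1) := by
      have := (e1 0 ⟨le_rfl, one_pos⟩).continuousAt.tendsto
      simp only [z2] at this
      rw [hψ]
      exact this.mono_left nhdsWithin_le_nhds
    have h1 := hψ0.const_mul C2
    rw [mul_one] at h1
    refine tendsto_nhds_unique (h1.congr' ?_) cH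
    filter_upwards [Ioo_mem_nhdsGT (show (0 : ℝ) < 1 by norm_num)] with r hr
    exact (hC2 r hr).symm
  have pw : ∀ m : ℕ, Tendsto (fun r : ℝ => r ^ m) (nhdsWithin 1 (Iio 1)) (nhds 1) := by
    intro m
    have : Continuous (fun r : ℝ => r ^ m) := by fun_prop
    have h := (this.tendsto 1).mono_left (nhdsWithin_le_nhds (s := Iio 1))
    simpa using h
  have hmem : Ioo (0 : ℝ) 1 ∈ nhdsWithin (1 : ℝ) (Iio 1) := Ioo_mem_nhdsLT (by norm_num)
  have hCU : C * (∑' m, hc α β c m) = 1 := by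
    have h := ((pw (p + 1)).mul Lφ).const_mul C
    rw [one_mul] at h
    refine tendsto_nhds_unique (h.congr' ?_) h1
    filter_upwards [hmem] with r hr
    exact (hgC r hr).symm
  have fin := (((pw p).mul Lψ).const_mul (C * (p + 1))).const_mul ((2 : ℝ) ^ (-b))
  rw [one_mul] at fin
  have hval : (2 : ℝ) ^ (-b) * (Gamma (b + 1) / Gamma (1 - b)) *
        (Gamma (β + 1 - b) * Gamma (α + 1 - b) / (Gamma (α + 1) * Gamma (β + 1))) * ((p + 1 : ℕ) : ℝ)
      = (2 : ℝ) ^ (-b) * (C * (p + 1) * ∑' m, hc (α - b) (β - b) c m) := by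
    have g1 := Gamma_pos_of_pos pos1.1
    have g2 := Gamma_pos_of_pos pos1.2
    have g3 := Gamma_pos_of_pos pos2.1
    have g4 := Gamma_pos_of_pos pos2.2
    have g5 := Gamma_pos_of_pos hc0
    have g6 := Gamma_pos_of_pos (show 0 < 1 - b by linarith)
    have := final_alg ((2 : ℝ) ^ (-b)) _ _ _ _ _ _ (Gamma (b + 1)) (p + 1 : ℝ) C _ _ g1 g2 g3 g4 g5 g6 G1 G2 hCU
    rw [← this]
    push_cast
    rfl
  rw [hval]
  refine fin.congr' ?_
  filter_upwards [hmem] with r hr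
  have hpos : 0 < 1 - r ^ 2 := by nlinarith [hr.1, hr.2]
  have h2 := hC2 r hr
  rw [hC2p, hH] at h2
  simp only at h2
  rw [hg1 r hr, div_rpow hpos.le (by norm_num), rpow_neg (by norm_num)]
  have : C * (↑p + 1) * (r ^ p * ψ r) = C * r ^ p * ((↑p + 1) * ψ r) := by ring
  rw [this, ← h2]
  ring
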